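/- Let f : ℝ^{d_0} × ⋯ × ℝ^{d_q} → ℝ be a function of the block variables (w_0, …, w_q), and suppose that for each block m ∈ {0, …, q} and each fixed value of the other blocks, the map w_m ↦ f(w_0, …, w_m, …, w_q) is L_m-smooth. Let μ_m > 0 and let f_{μ_m} denote the Gaussian smoothing of f in block m only, i.e., f_{μ_m}(w) = E_{u_m}[f(w_0, …, w_m + μ_m u_m, …, w_q)] with u_m ~ N(0, I_{d_m}). Then for every w and every block m, ‖∇_m f_{μ_m}(w) − ∇_m f(w)‖² ≤ μ_m² L_m² (d_m + 3)³ / 4, where ∇_m denotes the partial gradient with respect to w_m. -/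

import Mathlib

/-!
The gradient of the smoothing is the average of the gradients at the randomly displaced points, by
differentiation under the integral sign. A Lipschitz gradient moves by at most `L` times the
displacement, so by the Cauchy-Schwarz inequality the squared bias is at most `L²` times the second
moment of the displacement. That moment is `μ² d` for `μ • u` with `u` a standard Gaussian, and
`d ≤ (d + 3)³ / 4`.
-/

open MeasureTheory ProbabilityTheory

/-- The standard multivariate Gaussian distribution `N(0, I_d)` on `ℝ^d`. -/
noncomputable def stdGaussian (d : ℕ) : Measure (EuclideanSpace ℝ (Fin d)) :=
  (Measure.pi fun _ : Fin d => gaussianReal 0 1).map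
    (MeasurableEquiv.toLp 2 (Fin d → ℝ))

section Lipschitz

variable {E F : Type*} [NormedAddCommGroup E] [NormedAddCommGroup F] {K : NNReal}

lemma norm_apply_le_of_lipschitzWith {f : E → F} (hf : LipschitzWith K f) (x y : E) :
    ‖f y‖ ≤ ‖f x‖ + K * ‖y - x‖ :=
  (norm_le_norm_add_norm_sub' (f y) (f x)).trans (by gcongr; exact hf.norm_sub_le y x)

variable [NormedSpace ℝ E] [NormedSpace ℝ F]

lemma norm_sub_le_of_lipschitzWith_fderiv {g : E → F} (hg : Differentiable ℝ g)
    (hK : LipschitzWith K (fderiv ℝ g)) (x v : E) :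
    ‖g (x + v) - g x‖ ≤ (‖fderiv ℝ g x‖ + K * ‖v‖) * ‖v‖ := by
  have fderiv_le : ∀ y ∈ Metric.closedBall x ‖v‖, ‖fderiv ℝ g y‖ ≤ ‖fderiv ℝ g x‖ + K * ‖v‖ := by
    intro y hy
    refine (norm_apply_le_of_lipschitzWith hK x y).trans ?_
    gcongr
    exact mem_closedBall_iff_norm.1 hy
  simpa only [add_sub_cancel_left] using
    (convex_closedBall x ‖v‖).norm_image_sub_le_of_norm_fderiv_le (𝕜 := ℝ) (fun y _ => hg y)
      fderiv_le (Metric.mem_closedBall_self (norm_nonneg v))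
      (show x + v ∈ Metric.closedBall x ‖v‖ by simp)

end Lipschitz

lemma sq_integral_le_integral_sq {Ω : Type*} [MeasurableSpace Ω] {P : Measure Ω}
    [IsProbabilityMeasure P] {X : Ω → ℝ} (hX : MemLp X 2 P) :
    (∫ ω, X ω ∂P) ^ 2 ≤ ∫ ω, X ω ^ 2 ∂P :=
  sub_nonneg.1 (variance_eq_sub hX ▸ variance_nonneg X P)

section RandomTranslation

variable {Ω E F : Type*} [MeasurableSpace Ω] {P : Measure Ω} [NormedAddCommGroup E]
  [NormedAddCommGroup F] {K : NNReal} {X : Ω → E}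

lemma integrable_comp_add_of_lipschitzWith [IsFiniteMeasure P] (hX : Integrable X P)
    {f : E → F} (hf : LipschitzWith K f) (x : E) : Integrable (fun ω => f (x + X ω)) P :=
  ((integrable_const ‖f x‖).add (hX.norm.const_mul (K : ℝ))).mono'
    (hf.continuous.comp_aestronglyMeasurable (hX.aestronglyMeasurable.const_add x))
    (.of_forall fun ω => by
      simpa only [Pi.add_apply, add_sub_cancel_left] using
        norm_apply_le_of_lipschitzWith hf x (x + X ω))

variable [NormedSpace ℝ E] [NormedSpace ℝ F] {g : E → F}

lemma integrable_comp_add_of_lipschitzWith_fderiv [IsFiniteMeasure P] (hX : MemLp X 2 P)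
    (hg : Differentiable ℝ g) (hK : LipschitzWith K (fderiv ℝ g)) (x : E) :
    Integrable (fun ω => g (x + X ω)) P := by
  have bound_integrable : Integrable
      (fun ω => ‖g x‖ + (‖fderiv ℝ g x‖ * ‖X ω‖ + K * ‖X ω‖ ^ 2)) P :=
    (integrable_const _).add
      (((hX.integrable one_le_two).norm.const_mul _).add (hX.norm.integrable_sq.const_mul _))
  refine bound_integrable.mono'
    (hg.continuous.comp_aestronglyMeasurable (hX.aestronglyMeasurable.const_add x))
    (.of_forall fun ω => ?_)
  calc ‖g (x + X ω)‖
      ≤ ‖g x‖ + ‖g (x + X ω) - g x‖ := norm_le_norm_add_norm_sub' _ _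
    _ ≤ ‖g x‖ + (‖fderiv ℝ g x‖ + K * ‖X ω‖) * ‖X ω‖ := by
        gcongr
        exact norm_sub_le_of_lipschitzWith_fderiv hg hK x (X ω)
    _ = ‖g x‖ + (‖fderiv ℝ g x‖ * ‖X ω‖ + K * ‖X ω‖ ^ 2) := by ring

lemma hasFDerivAt_integral_comp_add [IsFiniteMeasure P] (hX : MemLp X 2 P)
    (hg : Differentiable ℝ g) (hK : LipschitzWith K (fderiv ℝ g)) (x : E) :
    HasFDerivAt (fun y => ∫ ω, g (y + X ω) ∂P) (∫ ω, fderiv ℝ g (x + X ω) ∂P) x := by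
  have hX₁ : Integrable X P := hX.integrable one_le_two
  have fderiv_le (ω : Ω) (y : E) (hy : y ∈ Metric.ball x 1) :
      ‖fderiv ℝ g (y + X ω)‖ ≤ ‖fderiv ℝ g (x + X ω)‖ + K := by
    refine (norm_apply_le_of_lipschitzWith hK (x + X ω) (y + X ω)).trans ?_
    rw [add_sub_add_right_eq_sub]
    gcongr
    exact mul_le_of_le_one_right K.coe_nonneg (mem_ball_iff_norm.1 hy).le
  have fderiv_integrable : Integrable (fun ω => fderiv ℝ g (x + X ω)) P :=
    integrable_comp_add_of_lipschitzWith hX₁ hK x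
  exact hasFDerivAt_integral_of_dominated_of_fderiv_le (F' := fun y ω => fderiv ℝ g (y + X ω))
    (Metric.ball_mem_nhds x one_pos)
    (.of_forall fun y =>
      (integrable_comp_add_of_lipschitzWith_fderiv hX hg hK y).aestronglyMeasurable)
    (integrable_comp_add_of_lipschitzWith_fderiv hX hg hK x)
    fderiv_integrable.aestronglyMeasurable
    (.of_forall fderiv_le)
    (fderiv_integrable.norm.add (integrable_const (K : ℝ)))
    (.of_forall fun ω y _ => (hasFDerivAt_comp_add_right (X ω)).2 (hg (y + X ω)).hasFDerivAt)

lemma norm_fderiv_integral_comp_add_sub_le [CompleteSpace F] [IsProbabilityMeasure P]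
    (hX : MemLp X 2 P) (hg : Differentiable ℝ g) (hK : LipschitzWith K (fderiv ℝ g)) (x : E) :
    ‖fderiv ℝ (fun y => ∫ ω, g (y + X ω) ∂P) x - fderiv ℝ g x‖ ≤ K * ∫ ω, ‖X ω‖ ∂P := by
  have hX₁ : Integrable X P := hX.integrable one_le_two
  have fderiv_sub_eq : fderiv ℝ (fun y => ∫ ω, g (y + X ω) ∂P) x - fderiv ℝ g x =
      ∫ ω, (fderiv ℝ g (x + X ω) - fderiv ℝ g x) ∂P := by
    rw [(hasFDerivAt_integral_comp_add hX hg hK x).fderiv,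
      integral_sub (integrable_comp_add_of_lipschitzWith hX₁ hK x) (integrable_const _),
      integral_const, probReal_univ, one_smul]
  rw [fderiv_sub_eq, ← integral_const_mul]
  refine norm_integral_le_of_norm_le (hX₁.norm.const_mul _) (.of_forall fun ω => ?_)
  simpa only [add_sub_cancel_left] using hK.norm_sub_le (x + X ω) x

lemma sq_norm_fderiv_integral_comp_add_sub_le [CompleteSpace F] [IsProbabilityMeasure P]
    (hX : MemLp X 2 P) (hg : Differentiable ℝ g) (hK : LipschitzWith K (fderiv ℝ g)) (x : E) :
    ‖fderiv ℝ (fun y => ∫ ω, g (y + X ω) ∂P) x - fderiv ℝ g x‖ ^ 2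
      ≤ K ^ 2 * ∫ ω, ‖X ω‖ ^ 2 ∂P :=
  calc ‖fderiv ℝ (fun y => ∫ ω, g (y + X ω) ∂P) x - fderiv ℝ g x‖ ^ 2
      ≤ (K * ∫ ω, ‖X ω‖ ∂P) ^ 2 := by
        gcongr
        exact norm_fderiv_integral_comp_add_sub_le hX hg hK x
    _ = K ^ 2 * (∫ ω, ‖X ω‖ ∂P) ^ 2 := mul_pow _ _ _
    _ ≤ K ^ 2 * ∫ ω, ‖X ω‖ ^ 2 ∂P := by
        gcongr
        exact sq_integral_le_integral_sq hX.norm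

end RandomTranslation

lemma norm_gradient_sub_gradient {𝕜 E : Type*} [RCLike 𝕜] [NormedAddCommGroup E]
    [InnerProductSpace 𝕜 E] [CompleteSpace E] (g h : E → 𝕜) (x y : E) :
    ‖gradient g x - gradient h y‖ = ‖fderiv 𝕜 g x - fderiv 𝕜 h y‖ := by
  rw [gradient, gradient, ← map_sub, LinearIsometryEquiv.norm_map]

section StdGaussian

lemma stdGaussian_eq_stdGaussian_euclideanSpace (d : ℕ) :
    _root_.stdGaussian d = ProbabilityTheory.stdGaussian (EuclideanSpace ℝ (Fin d)) :=
  map_pi_eq_stdGaussian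

variable {E : Type*} [NormedAddCommGroup E] [InnerProductSpace ℝ E] [FiniteDimensional ℝ E]
  [MeasurableSpace E] [BorelSpace E]

lemma integral_sq_strongDual_stdGaussian (φ : StrongDual ℝ E) :
    ∫ u, φ u ^ 2 ∂(ProbabilityTheory.stdGaussian E) = ‖φ‖ ^ 2 := by
  rw [← variance_dual_stdGaussian φ, variance_of_integral_eq_zero
    φ.continuous.aemeasurable (integral_strongDual_stdGaussian φ)]

variable (E) in
lemma integral_norm_sq_stdGaussian :
    ∫ u, ‖u‖ ^ 2 ∂(ProbabilityTheory.stdGaussian E) = Module.finrank ℝ E := by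
  let b := stdOrthonormalBasis ℝ E
  have coordinate_integrable (i) :
      Integrable (fun u => innerSL ℝ (b i) u ^ 2) (ProbabilityTheory.stdGaussian E) :=
    (IsGaussian.memLp_dual _ (innerSL ℝ (b i)) 2 (by simp)).integrable_sq
  calc ∫ u, ‖u‖ ^ 2 ∂(ProbabilityTheory.stdGaussian E)
      = ∫ u, ∑ i, innerSL ℝ (b i) u ^ 2 ∂(ProbabilityTheory.stdGaussian E) := by
        simp only [innerSL_apply_apply, b.sum_sq_inner_right]
    _ = ∑ i, ‖innerSL ℝ (b i)‖ ^ 2 := by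
        rw [integral_finsetSum _ fun i _ => coordinate_integrable i]
        simp only [integral_sq_strongDual_stdGaussian]
    _ = Module.finrank ℝ E := by simp

-- The blocks other than `m` are mere parameters, so the bound concerns one function of one block.
theorem block_gaussian_smoothing_gradient_bound_general {g : E → ℝ} {L : ℝ}
    (hg : Differentiable ℝ g)
    (hlip : ∀ z z', ‖gradient g z - gradient g z'‖ ≤ L * ‖z - z'‖) (μ : ℝ) (x : E) :
    ‖gradient (fun z => ∫ u, g (z + μ • u) ∂(ProbabilityTheory.stdGaussian E)) x
      - gradient g x‖ ^ 2 ≤ μ ^ 2 * L ^ 2 * Module.finrank ℝ E := by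
  have lipschitzWith_fderiv : LipschitzWith (Real.nnabs L) (fderiv ℝ g) :=
    .of_dist_le_mul fun z z' => by
      rw [dist_eq_norm, dist_eq_norm, ← norm_gradient_sub_gradient, Real.coe_nnabs]
      exact (hlip z z').trans (by gcongr; exact le_abs_self L)
  have memLp_displacement : MemLp (fun u => μ • u) 2 (ProbabilityTheory.stdGaussian E) :=
    IsGaussian.memLp_two_id.const_smul μ
  rw [norm_gradient_sub_gradient]
  refine (sq_norm_fderiv_integral_comp_add_sub_le memLp_displacement hg lipschitzWith_fderiv
    x).trans_eq ?_
  simp only [Real.coe_nnabs, norm_smul, mul_pow, Real.norm_eq_abs, sq_abs, integral_const_mul,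
    integral_norm_sq_stdGaussian]
  ring

end StdGaussian

lemma le_add_three_pow_three_div_four {d : ℝ} (hd : 0 ≤ d) : d ≤ (d + 3) ^ 3 / 4 := by
  nlinarith [pow_nonneg hd 3, pow_nonneg hd 2]

/-- Block-wise Gaussian smoothing bound: if for each block `m` the partial map
`w_m ↦ f(w_0, …, w_m, …, w_q)` is `L_m`-smooth, then the block-`m` partial gradient of the
block-`m` Gaussian smoothing satisfies
`‖∇_m f_{μ_m}(w) − ∇_m f(w)‖² ≤ μ_m² L_m² (d_m + 3)³ / 4`. -/
theorem block_gaussian_smoothing_gradient_bound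
    (q : ℕ) (dd : Fin (q + 1) → ℕ) (Lm μm : Fin (q + 1) → ℝ)
    (hμ : ∀ m, 0 < μm m)
    (f : (∀ m, EuclideanSpace ℝ (Fin (dd m))) → ℝ)
    (hdiff : ∀ (m : Fin (q + 1)) (w : ∀ m, EuclideanSpace ℝ (Fin (dd m))),
      Differentiable ℝ (fun z => f (Function.update w m z)))
    (hlip : ∀ (m : Fin (q + 1)) (w : ∀ m, EuclideanSpace ℝ (Fin (dd m)))
        (z z' : EuclideanSpace ℝ (Fin (dd m))),
      ‖gradient (fun z => f (Function.update w m z)) z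
        - gradient (fun z => f (Function.update w m z)) z'‖ ≤ Lm m * ‖z - z'‖)
    (w : ∀ m, EuclideanSpace ℝ (Fin (dd m))) (m : Fin (q + 1)) :
    ‖gradient (fun z => ∫ u, f (Function.update w m (z + μm m • u)) ∂(stdGaussian (dd m))) (w m)
      - gradient (fun z => f (Function.update w m z)) (w m)‖ ^ 2
      ≤ (μm m) ^ 2 * (Lm m) ^ 2 * ((dd m : ℝ) + 3) ^ 3 / 4 := by
  rw [stdGaussian_eq_stdGaussian_euclideanSpace, mul_div_assoc]
  refine (block_gaussian_smoothing_gradient_bound_general (hdiff m w) (hlip m w) (μm m)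
    (w m)).trans ?_
  rw [finrank_euclideanSpace_fin]
  gcongr
  exact le_add_three_pow_three_div_four (Nat.cast_nonneg _)
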